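/- arXiv:2003.02819 — 3 statements merged into one kernel-verified Lean document; each statement's English description precedes it below -/
import Mathlib

section
/- Let L ≥ 1, let T ∈ ℝ^{L×L} be an invertible matrix, let p ∈ ℝ^L, and let the noisy class-probability vector be p̄ = Tᵀ p. Then for every loss vector ℓ ∈ ℝ^L, the backward-corrected expected loss equals the clean expected loss: Σ_{ȳ=1}^L p̄_{ȳ} · (T^{-1} ℓ)_{ȳ} = Σ_{y=1}^L p_y · ℓ_y. In particular, (Tᵀ)^{-1} p̄ = p, so backward correction exactly recovers the clean class-probabilities. -/
open Matrix

/-- For an invertible transition matrix `T`, clean class-probabilities `p`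
and noisy class-probabilities `p̄ = Tᵀ p`, the backward-corrected expected loss equals
the clean expected loss for every loss vector `ℓ`; in particular `(Tᵀ)⁻¹ p̄ = p`. -/
theorem stmt5 (L : ℕ) (hL : 1 ≤ L) (T : Matrix (Fin L) (Fin L) ℝ)
    (hT : IsUnit T.det) (p pbar : Fin L → ℝ) (hpbar : pbar = T.transpose.mulVec p) :
    (∀ ℓ : Fin L → ℝ, pbar ⬝ᵥ (T⁻¹.mulVec ℓ) = p ⬝ᵥ ℓ) ∧
    (T.transpose)⁻¹.mulVec pbar = p := by
  subst hpbar
  refine ⟨fun ℓ => ?_, ?_⟩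
  · rw [Matrix.mulVec_transpose, ← Matrix.dotProduct_mulVec, Matrix.mulVec_mulVec,
      Matrix.mul_nonsing_inv T hT, Matrix.one_mulVec]
  · have hT' : IsUnit (T.transpose).det := by rwa [Matrix.det_transpose]
    rw [Matrix.mulVec_mulVec, Matrix.nonsing_inv_mul _ hT', Matrix.one_mulVec]
end

section
/- Let L ≥ 2, α ∈ (0,1), and y ∈ {1,…,L}. The backward-corrected softmax cross-entropy for symmetric noise, ℓ^←(y,f) = (1/(1−α))·[ ℓ(y,f) − (α/L)·Σ_{y'=1}^L ℓ(y',f) ] with ℓ(y,f) = −f_y + log Σ_{y'} exp(f_{y'}), is unbounded below: along f = t·e_y with t → ∞, ℓ^←(y, t·e_y) → −∞. In particular backward correction assigns arbitrarily negative loss to sufficiently confident correct predictions. -/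
/-- For `L ≥ 2` and `α ∈ (0,1)`, the backward-corrected softmax
cross-entropy for symmetric noise, `ℓ^←(y,f) = (1/(1−α))·[ℓ(y,f) − (α/L)·Σ_{y'} ℓ(y',f)]`,
is unbounded below: along `f = t·e_y` with `t → ∞` it tends to `−∞`. -/
theorem stmt15 (L : ℕ) (hL : 2 ≤ L) (α : ℝ) (hα0 : 0 < α) (hα1 : α < 1) (y : Fin L)
    (ℓ : Fin L → (Fin L → ℝ) → ℝ)
    (hℓ : ∀ y' f, ℓ y' f = -(f y') + Real.log (∑ j, Real.exp (f j)))
    (ℓb : Fin L → (Fin L → ℝ) → ℝ)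
    (hℓb : ∀ y' f, ℓb y' f = (1 / (1 - α)) * (ℓ y' f - (α / L) * ∑ y'', ℓ y'' f)) :
    ¬ BddBelow (Set.range (ℓb y)) ∧
    Filter.Tendsto (fun t : ℝ => ℓb y (t • (Pi.single y 1 : Fin L → ℝ)))
      Filter.atTop Filter.atBot := by
  have hL' : (2:ℝ) ≤ L := by exact_mod_cast hL
  have hLpos : (0:ℝ) < L := by linarith
  have h1 : 0 < 1 - α := by linarith
  have key : Filter.Tendsto (fun t : ℝ => ℓb y (t • (Pi.single y 1 : Fin L → ℝ)))
      Filter.atTop Filter.atBot := by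
    have hc : 0 < (α - α / L) / (1 - α) := by
      apply div_pos _ h1
      have : α / L < α := div_lt_self hα0 (by linarith)
      linarith
    have hlin : Filter.Tendsto
        (fun t : ℝ => Real.log L + -((α - α / L) / (1 - α) * t)) Filter.atTop Filter.atBot :=
      Filter.tendsto_atBot_add_const_left _ _
        (Filter.tendsto_neg_atTop_atBot.comp (Filter.tendsto_id.const_mul_atTop hc))
    refine Filter.tendsto_atBot_mono' _ ?_ hlin
    filter_upwards [Filter.eventually_ge_atTop (0:ℝ)] with t ht
    set f : Fin L → ℝ := t • (Pi.single y 1 : Fin L → ℝ) with hf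
    have hfy : f y = t := by simp [hf]
    have hfle : ∀ j, f j ≤ t := by
      intro j
      by_cases h : j = y
      · rw [h, hfy]
      · simp [hf, Pi.single_apply, h, ht]
    have hsumf : ∑ j, f j = t := by
      simp [hf, Pi.single_apply]
    have hpos : 0 < ∑ j, Real.exp (f j) :=
      Finset.sum_pos (fun j _ => Real.exp_pos _) ⟨y, Finset.mem_univ y⟩
    have hS : Real.log (∑ j, Real.exp (f j)) ≤ Real.log L + t := by
      have hle : ∑ j, Real.exp (f j) ≤ L * Real.exp t := by
        calc ∑ j, Real.exp (f j) ≤ ∑ _j : Fin L, Real.exp t :=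
              Finset.sum_le_sum (fun j _ => Real.exp_le_exp.mpr (hfle j))
          _ = L * Real.exp t := by simp
      calc _ ≤ Real.log (L * Real.exp t) := Real.log_le_log hpos hle
        _ = _ := by rw [Real.log_mul hLpos.ne' (Real.exp_pos t).ne', Real.log_exp]
    have hEq : ℓb y f = Real.log (∑ j, Real.exp (f j)) - t
        + -((α - α / L) / (1 - α) * t) := by
      rw [hℓb]
      simp only [hℓ]
      rw [Finset.sum_add_distrib, Finset.sum_neg_distrib, hsumf, hfy]
      simp only [Finset.sum_const, Finset.card_univ, Fintype.card_fin, nsmul_eq_mul]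
      have h1' := h1.ne'
      have h2' := hLpos.ne'
      field_simp
      ring
    rw [hEq]
    linarith
  refine ⟨?_, key⟩
  rintro ⟨b, hb⟩
  obtain ⟨t, ht⟩ := (key.eventually (Filter.eventually_lt_atBot b)).exists
  exact absurd (hb ⟨_, rfl⟩) (not_le.mpr ht)
end

section
/- Let L ≥ 1, α ∈ (0,1], and T = (1−α)·I + (α/L)·J. Define the forward-corrected softmax cross-entropy by ℓ^→(y,f) = −log( (Tᵀ q)_y ), where q ∈ ℝ^L is the softmax of f, q_i = exp(f_i)/Σ_j exp(f_j). Then for every y ∈ {1,…,L} and every f ∈ ℝ^L, 0 ≤ ℓ^→(y,f) ≤ log(L/α); i.e., the forward-corrected loss is bounded (it saturates even for arbitrarily wrong confident predictions), because (Tᵀ q)_y = (1−α)·q_y + α/L ≥ α/L. -/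
open Matrix

/-- For `α ∈ (0,1]`, `T = (1−α)·I + (α/L)·J`, and `q` the softmax of `f`,
the forward-corrected loss `ℓ^→(y,f) = −log((Tᵀ q)_y)` satisfies
`0 ≤ ℓ^→(y,f) ≤ log(L/α)`, because `(Tᵀ q)_y = (1−α)·q_y + α/L ≥ α/L`. -/
theorem stmt16 (L : ℕ) (hL : 1 ≤ L) (α : ℝ) (hα0 : 0 < α) (hα1 : α ≤ 1)
    (T : Matrix (Fin L) (Fin L) ℝ)
    (hT : T = (1 - α) • (1 : Matrix (Fin L) (Fin L) ℝ) +
      (α / L) • Matrix.of (fun _ _ => (1 : ℝ)))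
    (f : Fin L → ℝ) (q : Fin L → ℝ)
    (hq : ∀ i, q i = Real.exp (f i) / ∑ j, Real.exp (f j)) (y : Fin L) :
    T.transpose.mulVec q y = (1 - α) * q y + α / L ∧
    α / L ≤ T.transpose.mulVec q y ∧
    0 ≤ -Real.log (T.transpose.mulVec q y) ∧
    -Real.log (T.transpose.mulVec q y) ≤ Real.log ((L : ℝ) / α) := by
  have hS : 0 < ∑ j, Real.exp (f j) :=
    Finset.sum_pos (fun j _ => Real.exp_pos _) ⟨y, Finset.mem_univ y⟩
  have hq0 : ∀ i, 0 ≤ q i := fun i => by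
    rw [hq i]; exact div_nonneg (Real.exp_pos _).le hS.le
  have hsum : ∑ i, q i = 1 := by
    simp only [hq]
    rw [← Finset.sum_div]
    exact div_self hS.ne'
  have hq1 : q y ≤ 1 := by
    rw [← hsum]
    exact Finset.single_le_sum (fun i _ => hq0 i) (Finset.mem_univ y)
  have hLR : (1 : ℝ) ≤ L := by exact_mod_cast hL
  have hL0 : (0 : ℝ) < L := by linarith
  have key : T.transpose.mulVec q y = (1 - α) * q y + α / L := by
    have hJ : ∑ i, (α / L) * q i = α / L := by
      rw [← Finset.mul_sum, hsum, mul_one]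
    have hI : ∑ i, (1 - α) * (1 : Matrix (Fin L) (Fin L) ℝ) i y * q i = (1 - α) * q y := by
      simp [Matrix.one_apply]
    rw [← hI]
    conv_rhs => rw [← hJ]
    rw [← Finset.sum_add_distrib]
    simp only [hT, Matrix.mulVec, dotProduct, Matrix.transpose_apply, Matrix.add_apply,
      Matrix.smul_apply, Matrix.of_apply, smul_eq_mul]
    refine Finset.sum_congr rfl (fun i _ => ?_)
    ring
  have hpos : 0 < α / L := div_pos hα0 hL0
  have hge : α / L ≤ T.transpose.mulVec q y := by
    rw [key]
    have := mul_nonneg (sub_nonneg.2 hα1) (hq0 y)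
    linarith
  have hle : T.transpose.mulVec q y ≤ 1 := by
    rw [key]
    have h1 := mul_le_mul_of_nonneg_left hq1 (sub_nonneg.2 hα1)
    have h2 : α / L ≤ α := div_le_self hα0.le hLR
    linarith
  refine ⟨key, hge, ?_, ?_⟩
  · have := Real.log_nonpos (hpos.le.trans hge) hle
    linarith
  · have h := Real.log_le_log hpos hge
    have h2 : Real.log ((L : ℝ) / α) = -Real.log (α / L) := by
      rw [← Real.log_inv, inv_div]
    linarith
end
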